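/- arXiv:2407.20069 — 7 statements merged into one kernel-verified Lean document; each statement's English description precedes it below -/
import Mathlib

section
/- Let a > 1/2 be a real number with G(a) = 0, let m > 0 be real, and set n := a·m + 1. Then F(t_max(n,m), n, m) = 1 − m/n; that is, the linear relationship n = a·m + 1 with a a root of the transcendental equation G(a) = 0 solves the optimality condition making the time-averaged distance at the maximum-probability time equal to 1 − m/n. -/
open Real

/-- Maximum-probability time of the Szegedy quantum walk on a complete graph. -/
noncomputable def tMax (n m : ℝ) : ℝ :=
  arctan (Real.sqrt ((2 * n - m - 2) / m)) / (2 * arccos ((n - m - 1) / (n - 1)))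

/-- Trig-extended time-averaged distance. -/
noncomputable def F (t n m : ℝ) : ℝ :=
  2 * (n - 1) * (n - m) *
      (2 * t + 1 -
        Real.sin ((2 * t + 1) * arccos ((n - m - 1) / (n - 1))) /
          Real.sin (arccos ((n - m - 1) / (n - 1)))) /
    (n * (2 * n - m - 2) * (t + 1))

/-- The transcendental expression. -/
noncomputable def G (a : ℝ) : ℝ :=
  (4 * Real.sqrt 2 * a ^ ((3 : ℝ) / 2) + 2 * a - 3) * arctan (Real.sqrt (2 * a - 1)) -
    2 * π * (Real.sqrt 2 * a ^ ((3 : ℝ) / 2) - 1)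

theorem solution_of_optimality_condition (a m n : ℝ) (ha : 1 / 2 < a) (hG : G a = 0)
    (hm : 0 < m) (hn : n = a * m + 1) :
    F (tMax n m) n m = 1 - m / n := by
  subst hn
  have ha0 : 0 < a := by linarith
  have hw : √2 * a ^ ((3 : ℝ) / 2) = a * √(2 * a) := by
    rw [Real.sqrt_mul (by norm_num), show (3 : ℝ) / 2 = 1 + 1 / 2 by norm_num,
      Real.rpow_add ha0, Real.rpow_one, ← Real.sqrt_eq_rpow]
    ring
  have e1 : (2 * (a * m + 1) - m - 2) / m = 2 * a - 1 := by field_simp; ring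
  have e2 : ((a * m + 1) - m - 1) / ((a * m + 1) - 1) = (a - 1) / a := by
    rw [show (a * m + 1) - m - 1 = (a - 1) * m by ring, show (a * m + 1) - 1 = a * m by ring,
      mul_div_mul_right _ _ hm.ne']
  unfold G at hG
  rw [mul_assoc 4, hw] at hG
  unfold F tMax
  rw [e1, e2]
  have hs : 0 < √(2 * a - 1) := Real.sqrt_pos.2 (by linarith)
  have hφ0 : 0 < arctan √(2 * a - 1) := Real.arctan_pos.2 hs
  have hφ1 : arctan √(2 * a - 1) < π / 2 := Real.arctan_lt_pi_div_two _
  have hcos : cos (arctan √(2 * a - 1)) = 1 / √(2 * a) := by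
    rw [Real.cos_arctan, Real.sq_sqrt (by linarith)]
    congr 2; ring
  set φ := arctan √(2 * a - 1) with hφ
  have hwp : 0 < √(2 * a) := Real.sqrt_pos.2 (by linarith)
  have hw2 : √(2 * a) ^ 2 = 2 * a := Real.sq_sqrt (by linarith)
  have hθ : arccos ((a - 1) / a) = π - 2 * φ := by
    rw [← Real.arccos_cos (x := π - 2 * φ) (by linarith) (by linarith)]
    congr 1
    rw [Real.cos_pi_sub, Real.cos_two_mul, hcos, div_pow, hw2]
    field_simp; ring
  rw [hθ]
  have hθ0 : 0 < π - 2 * φ := by linarith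
  have e3 : (2 * (φ / (2 * (π - 2 * φ))) + 1) * (π - 2 * φ) = π - φ := by
    field_simp; ring
  have hsin : 0 < sin φ := Real.sin_pos_of_pos_of_lt_pi hφ0 (by linarith)
  have e4 : sin φ / (2 * sin φ * cos φ) = √(2 * a) / 2 := by
    rw [hcos]; field_simp
  rw [e3, Real.sin_pi_sub, Real.sin_pi_sub, Real.sin_two_mul, e4]
  have hn0 : 0 < a * m + 1 := by positivity
  have ht : 0 < φ / (2 * (π - 2 * φ)) + 1 := by positivity
  have hden : 0 < 2 * (a * m + 1) - m - 2 := by nlinarith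
  have key : 2 * a * (2 * (φ / (2 * (π - 2 * φ))) + 1 - √(2 * a) / 2)
      = (2 * a - 1) * (φ / (2 * (π - 2 * φ)) + 1) := by
    have : φ = φ / (2 * (π - 2 * φ)) * (2 * (π - 2 * φ)) :=
      (div_mul_cancel₀ _ (by positivity)).symm
    generalize φ / (2 * (π - 2 * φ)) = t at *
    have h2 : (2 * (π - 2 * φ)) * (2 * a * (2 * t + 1 - √(2 * a) / 2)
      - (2 * a - 1) * (t + 1)) = 0 := by
      linear_combination hG - (2 * a + 1) * this
    have := (mul_eq_zero.1 h2).resolve_left (by linarith)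
    linarith
  generalize φ / (2 * (π - 2 * φ)) = t at *
  rw [div_eq_iff (by positivity), one_sub_div hn0.ne']
  field_simp
  linear_combination (m * (a * m + 1 - m)) * key
end

section
/- Let n, m be real numbers with n > 1, 0 < m < 2(n−1). Then F(t_max(n,m), n, m) = 1 − m/n if and only if m = n or Q(n,m) = 0. -/
open Real

/-- The expression `Q(n,m)` from the optimality condition. -/
noncomputable def Q (n m : ℝ) : ℝ :=
  2 * π * (m - Real.sqrt 2 * m * ((n - 1) / m) ^ ((3 : ℝ) / 2)) +
    (2 * (n - 1) * (2 * Real.sqrt 2 * Real.sqrt ((n - 1) / m) + 1) - 3 * m) *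
      arctan (Real.sqrt ((2 * n - m - 2) / m))

theorem optimality_condition_iff (n m : ℝ) (hn : 1 < n) (hm0 : 0 < m)
    (hm2 : m < 2 * (n - 1)) :
    F (tMax n m) n m = 1 - m / n ↔ m = n ∨ Q n m = 0 := by
  obtain ⟨N, rfl⟩ : ∃ N, n = N + 1 := ⟨n - 1, by ring⟩
  have hN : 0 < N := by linarith
  have hd : 0 < 2 * N - m := by linarith
  have e1 : (N + 1 - 1) = N := by ring
  have e2 : 2 * (N + 1) - m - 2 = 2 * N - m := by ring
  have e3 : (N + 1 - m - 1) = N - m := by ring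
  unfold F tMax Q
  rw [e1, e2, e3]
  set φ := arctan (Real.sqrt ((2 * N - m) / m)) with hφ
  have hx : 0 < (2 * N - m) / m := by positivity
  have hφ0 : 0 < φ := by
    rw [hφ]; exact Real.arctan_pos.2 (Real.sqrt_pos.2 hx)
  have hφ1 : φ < π / 2 := Real.arctan_lt_pi_div_two _
  have hc2 : Real.cos φ ^ 2 = m / (2 * N) := by
    rw [hφ, Real.cos_sq_arctan, Real.sq_sqrt hx.le]
    field_simp
    ring
  have hc0 : 0 < Real.cos φ := Real.cos_arctan_pos _
  have hs0 : 0 < Real.sin φ := Real.sin_pos_of_pos_of_lt_pi hφ0 (by linarith)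
  have hθ : arccos ((N - m) / N) = π - 2 * φ := by
    have : (N - m) / N = Real.cos (π - 2 * φ) := by
      rw [Real.cos_pi_sub, Real.cos_two_mul, hc2]
      field_simp
      ring
    rw [this, Real.arccos_cos (by linarith) (by linarith)]
  rw [hθ]
  set s := Real.sqrt (N / m) with hs
  have hspos : 0 < s := Real.sqrt_pos.2 (by positivity)
  have hs2 : s ^ 2 = N / m := Real.sq_sqrt (by positivity)
  have hpow : (N / m) ^ ((3 : ℝ) / 2) = N / m * s := by
    rw [hs, Real.sqrt_eq_rpow, show (3 : ℝ) / 2 = 1 + 1 / 2 by norm_num,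
      Real.rpow_add (by positivity), Real.rpow_one]
  rw [hpow]
  have h22 : Real.sqrt 2 ^ 2 = 2 := Real.sq_sqrt (by norm_num)
  have hsc : Real.sqrt 2 * s * Real.cos φ = 1 := by
    have h1 : (Real.sqrt 2 * s * Real.cos φ) ^ 2 = 1 := by
      rw [mul_pow, mul_pow, h22, hs2, hc2]
      field_simp
    have h2 : 0 < Real.sqrt 2 * s * Real.cos φ := by positivity
    nlinarith
  have hθ0 : 0 < π - 2 * φ := by linarith
  have ht : 2 * (φ / (2 * (π - 2 * φ))) + 1 = (π - φ) / (π - 2 * φ) := by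
    field_simp
    ring
  have ht1 : φ / (2 * (π - 2 * φ)) + 1 = (2 * π - 3 * φ) / (2 * (π - 2 * φ)) := by
    have key : ∀ a : ℝ, a ≠ 0 → φ / (2 * a) + 1 = (φ + 2 * a) / (2 * a) := by
      intro a ha
      field_simp
    rw [key _ hθ0.ne']
    congr 1
    ring
  have hratio : Real.sin ((π - φ) / (π - 2 * φ) * (π - 2 * φ)) / Real.sin (π - 2 * φ)
      = Real.sqrt 2 * s / 2 := by
    rw [div_mul_cancel₀ _ hθ0.ne', Real.sin_pi_sub, Real.sin_pi_sub, Real.sin_two_mul,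
      div_eq_div_iff (by positivity) (by norm_num)]
    linear_combination (-2 * Real.sin φ) * hsc
  rw [ht, ht1, hratio]
  have h3 : 0 < 2 * π - 3 * φ := by linarith
  have hn0 : 0 < N + 1 := by linarith
  have hQ : 2 * π * (m - Real.sqrt 2 * m * (N / m * s)) +
      (2 * N * (2 * Real.sqrt 2 * s + 1) - 3 * m) * φ =
      4 * N * (π - φ - Real.sqrt 2 * s / 2 * (π - 2 * φ)) - (2 * N - m) * (2 * π - 3 * φ) := by
    field_simp
    ring
  rw [hQ]
  generalize Real.sqrt 2 * s / 2 = r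
  have hF : 2 * N * (N + 1 - m) * ((π - φ) / (π - 2 * φ) - r) /
      ((N + 1) * (2 * N - m) * ((2 * π - 3 * φ) / (2 * (π - 2 * φ)))) - (1 - m / (N + 1)) =
      (N + 1 - m) * (4 * N * (π - φ - r * (π - 2 * φ)) - (2 * N - m) * (2 * π - 3 * φ)) /
      ((N + 1) * (2 * N - m) * (2 * π - 3 * φ)) := by
    have key : ∀ a b c d : ℝ, a ≠ 0 → b ≠ 0 → d ≠ 0 →
        2 * N * (N + 1 - m) * (c / a - r) / ((N + 1) * d * (b / (2 * a))) - (1 - m / (N + 1)) =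
        (N + 1 - m) * (4 * N * (c - r * a) - d * b) / ((N + 1) * d * b) := by
      intro a b c d ha hb hd
      field_simp
      ring
    exact key _ _ _ _ hθ0.ne' h3.ne' hd.ne'
  rw [← sub_eq_zero, hF, div_eq_zero_iff, mul_eq_zero]
  have hne : (N + 1) * (2 * N - m) * (2 * π - 3 * φ) ≠ 0 := by positivity
  constructor
  · rintro ((h | h) | h)
    · left; linarith
    · right; exact h
    · exact absurd h hne
  · rintro (h | h)
    · left; left; linarith
    · left; right; exact h
end

section
/- Let n, m be real numbers with n > 1 and 0 < m < 2(n−1), and set θ := arccos(1 − m/(n−1)) and T := t_max(n,m). Then sin((2T+1)·θ)/sin θ = √((n−1)/(2m)). (This is the simplification of the Chebyshev polynomial U_{2T} evaluated at (n−m−1)/(n−1) when T is the maximum-probability time.) -/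
open Real

theorem chebyshev_simplification_at_tmax (n m : ℝ) (hn : 1 < n) (hm0 : 0 < m)
    (hm2 : m < 2 * (n - 1)) :
    Real.sin ((2 * tMax n m + 1) * arccos (1 - m / (n - 1))) /
        Real.sin (arccos (1 - m / (n - 1))) =
      Real.sqrt ((n - 1) / (2 * m)) := by
  have hn1 : 0 < n - 1 := by linarith
  have hc : (n - m - 1) / (n - 1) = 1 - m / (n - 1) := by
    field_simp
    ring
  have hx0 : 0 < m / (n - 1) := div_pos hm0 hn1
  have hx2 : m / (n - 1) < 2 := by
    rw [div_lt_iff₀ hn1]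
    exact hm2
  have hcos : Real.cos (arccos (1 - m / (n - 1))) = 1 - m / (n - 1) :=
    Real.cos_arccos (by linarith) (by linarith)
  have hpos : 0 < arccos (1 - m / (n - 1)) := Real.arccos_pos.2 (by linarith)
  have hle : arccos (1 - m / (n - 1)) ≤ π := Real.arccos_le_pi _
  have hne : arccos (1 - m / (n - 1)) ≠ π := by
    intro h
    rw [h, Real.cos_pi] at hcos
    linarith
  have hlt : arccos (1 - m / (n - 1)) < π := lt_of_le_of_ne hle hne
  unfold tMax
  rw [hc]
  generalize arccos (1 - m / (n - 1)) = θ at *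
  obtain ⟨φ, rfl⟩ : ∃ φ, θ = 2 * φ := ⟨θ / 2, by ring⟩
  have hs : 0 < Real.sin φ := Real.sin_pos_of_pos_of_lt_pi (by linarith) (by linarith)
  have hk : 0 < Real.cos φ := Real.cos_pos_of_mem_Ioo ⟨by linarith, by linarith⟩
  have hsk := Real.sin_sq_add_cos_sq φ
  have hm : m = 2 * Real.sin φ ^ 2 * (n - 1) := by
    rw [← div_eq_iff hn1.ne']
    rw [Real.cos_two_mul] at hcos
    linarith
  have h1 : (2 * n - m - 2) / m = (Real.cos φ / Real.sin φ) ^ 2 := by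
    rw [div_pow, div_eq_div_iff hm0.ne' (by positivity), hm]
    have : Real.cos φ ^ 2 = 1 - Real.sin φ ^ 2 := by linarith
    rw [this]
    ring
  have h2 : Real.arctan (Real.cos φ / Real.sin φ) = π / 2 - φ := by
    have : Real.cos φ / Real.sin φ = Real.tan (π / 2 - φ) := by
      rw [Real.tan_eq_sin_div_cos, Real.sin_pi_div_two_sub, Real.cos_pi_div_two_sub]
    rw [this, Real.arctan_tan (by linarith) (by linarith)]
  have h3 : (n - 1) / (2 * m) = (1 / (2 * Real.sin φ)) ^ 2 := by
    rw [hm]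
    field_simp
    try ring
  rw [h1, Real.sqrt_sq (by positivity), h2, h3, Real.sqrt_sq (by positivity)]
  have hφ : φ ≠ 0 := by
    intro h
    simp [h] at hpos
  have h4 : (2 * ((π / 2 - φ) / (2 * (2 * φ))) + 1) * (2 * φ) = φ + π / 2 := by
    field_simp
    ring
  rw [h4, Real.sin_add_pi_div_two, Real.sin_two_mul]
  field_simp
end

section
/- For every real number a with 1.44 ≤ a ≤ 1.45, the quantity arctan(√(2a−1)) / (2·arccos((a−1)/a)) + π / arccos((a−1)/a) lies strictly between 2.8 and 2.9; in particular the closest integer to this second-maximum time is 3. -/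
open Real

theorem second_maximum_time_bounds (a : ℝ) (ha1 : 1.44 ≤ a) (ha2 : a ≤ 1.45) :
    2.8 < arctan (Real.sqrt (2 * a - 1)) / (2 * arccos ((a - 1) / a)) +
        π / arccos ((a - 1) / a) ∧
      arctan (Real.sqrt (2 * a - 1)) / (2 * arccos ((a - 1) / a)) +
          π / arccos ((a - 1) / a) < 2.9 ∧
      round (arctan (Real.sqrt (2 * a - 1)) / (2 * arccos ((a - 1) / a)) +
          π / arccos ((a - 1) / a)) = 3 := by
  have hapos : 0 < a := by linarith
  set u := arctan (Real.sqrt (2 * a - 1)) with hu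
  have hu0 : 0 ≤ u := arctan_nonneg.mpr (Real.sqrt_nonneg _)
  have hu1 : u < π / 2 := arctan_lt_pi_div_two _
  have hcos : cos (π - 2 * u) = (a - 1) / a := by
    rw [cos_pi_sub, cos_two_mul, hu, cos_sq_arctan, Real.sq_sqrt (by linarith)]
    have : (1 : ℝ) + (2 * a - 1) = 2 * a := by ring
    rw [this]
    field_simp
    ring
  have ht : arccos ((a - 1) / a) = π - 2 * u := by
    rw [← hcos, arccos_cos (by linarith) (by linarith)]
  have hx1 : 0.305 ≤ (a - 1) / a := by
    rw [le_div_iff₀ hapos]; linarith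
  have hx2 : (a - 1) / a ≤ 0.311 := by
    rw [div_le_iff₀ hapos]; linarith
  have hp1 := pi_gt_d4
  have hp2 := pi_lt_d4
  -- upper bound on the arccos
  have hlt : π - 2 * u < 1.287 := by
    by_contra! h
    have h1 : cos (π - 2 * u) ≤ cos 1.287 :=
      cos_le_cos_of_nonneg_of_le_pi (by norm_num) (by linarith) h
    have h2 : cos 1.287 = sin (π / 2 - 1.287) := (sin_pi_div_two_sub _).symm
    have h3 : sin (π / 2 - 1.287) < π / 2 - 1.287 := sin_lt (by linarith)
    linarith
  -- lower bound on the arccos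
  have hgt : 1.247 < π - 2 * u := by
    by_contra! h
    have h1 : cos 1.247 ≤ cos (π - 2 * u) :=
      cos_le_cos_of_nonneg_of_le_pi (by linarith) (by linarith) h
    have h2 : cos 1.247 = sin (π / 2 - 1.247) := (sin_pi_div_two_sub _).symm
    have h3 : sin 0.3237 ≤ sin (π / 2 - 1.247) :=
      sin_le_sin_of_le_of_le_pi_div_two (by linarith) (by linarith) (by linarith)
    have h4 : (0.3237 : ℝ) - 0.3237 ^ 3 / 6 < sin 0.3237 :=
      sin_gt_sub_cube (by norm_num)
    norm_num at *
    linarith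
  rw [ht]
  have hpos : 0 < π - 2 * u := by linarith
  have hval : u / (2 * (π - 2 * u)) + π / (π - 2 * u) = (u + 2 * π) / (2 * (π - 2 * u)) := by
    field_simp
    try ring
  rw [hval]
  have hA : 2.8 < (u + 2 * π) / (2 * (π - 2 * u)) := by
    rw [lt_div_iff₀ (by linarith)]; linarith
  have hB : (u + 2 * π) / (2 * (π - 2 * u)) < 2.9 := by
    rw [div_lt_iff₀ (by linarith)]; linarith
  refine ⟨hA, hB, ?_⟩
  rw [round_eq, Int.floor_eq_iff]
  constructor
  · push_cast; linarith
  · push_cast; linarith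
end

section
/- Let a > 1 be real, set θ := arccos((a−1)/a), t* := arctan(√(2a−1)) / (2θ), and B := (a/(2a−1))·cos(2t*θ)·(sin(2t*θ)/sin θ) + (a−1)/(2a−1). Then the limit as n → ∞ of P(t*, n, (n−1)/a) exists and equals ((a−1)·B² + 1)/a². -/
open Real Filter Topology

/-- Trig-extended marked-node probability of the Szegedy quantum walk on a complete graph. -/
noncomputable def P (t n m : ℝ) : ℝ :=
  m * (n - m) / (n * (n - 1)) *
      ((n - 1) / (2 * n - m - 2) * Real.cos (2 * t * arccos ((n - m - 1) / (n - 1))) *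
          (Real.sin (2 * t * arccos ((n - m - 1) / (n - 1))) /
            Real.sin (arccos ((n - m - 1) / (n - 1)))) +
        (n - m - 1) / (2 * n - m - 2)) ^ 2 +
    m * (m - 1) / (n * (n - 1))

theorem limit_P_at_top (a : ℝ) (ha : 1 < a) :
    Filter.Tendsto
      (fun n : ℝ =>
        P (arctan (Real.sqrt (2 * a - 1)) / (2 * arccos ((a - 1) / a))) n ((n - 1) / a))
      atTop
      (𝓝 (((a - 1) *
          (a / (2 * a - 1) *
              Real.cos (2 * (arctan (Real.sqrt (2 * a - 1)) / (2 * arccos ((a - 1) / a))) *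
                arccos ((a - 1) / a)) *
              (Real.sin (2 * (arctan (Real.sqrt (2 * a - 1)) / (2 * arccos ((a - 1) / a))) *
                  arccos ((a - 1) / a)) /
                Real.sin (arccos ((a - 1) / a))) +
            (a - 1) / (2 * a - 1)) ^ 2 + 1) / a ^ 2)) := by
  have ha0 : a ≠ 0 := by positivity
  have h2a : 2 * a - 1 ≠ 0 := by linarith
  generalize arctan (Real.sqrt (2 * a - 1)) / (2 * arccos ((a - 1) / a)) = t
  set B := a / (2 * a - 1) * Real.cos (2 * t * arccos ((a - 1) / a)) *
    (Real.sin (2 * t * arccos ((a - 1) / a)) / Real.sin (arccos ((a - 1) / a))) +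
      (a - 1) / (2 * a - 1) with hB
  have hlim : Tendsto (fun n : ℝ => (1 / a) * ((1 - 1 / a) + n⁻¹ / a) * B ^ 2 +
      (1 / a) * (1 / a - (1 / a + 1) * n⁻¹)) atTop
      (𝓝 ((1 / a) * ((1 - 1 / a) + 0 / a) * B ^ 2 + (1 / a) * (1 / a - (1 / a + 1) * 0))) := by
    have h0 : Tendsto (fun n : ℝ => n⁻¹) atTop (𝓝 0) := tendsto_inv_atTop_zero
    exact ((((h0.div_const a).const_add _).const_mul _).mul_const _).add
      (((h0.const_mul _).const_sub _).const_mul _)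
  have he : (1 / a) * ((1 - 1 / a) + 0 / a) * B ^ 2 + (1 / a) * (1 / a - (1 / a + 1) * 0)
      = ((a - 1) * B ^ 2 + 1) / a ^ 2 := by
    field_simp
    ring
  rw [he] at hlim
  refine hlim.congr' ?_
  filter_upwards [eventually_gt_atTop 1] with n hn
  have hn0 : n ≠ 0 := by positivity
  have hn1 : n - 1 ≠ 0 := by linarith
  have e1 : (n - (n - 1) / a - 1) / (n - 1) = (a - 1) / a := by
    field_simp
    ring
  have e0 : 2 * n - (n - 1) / a - 2 = (n - 1) * ((2 * a - 1) / a) := by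
    field_simp
    ring
  have e2 : (n - 1) / (2 * n - (n - 1) / a - 2) = a / (2 * a - 1) := by
    rw [e0]
    field_simp
  have e3 : (n - (n - 1) / a - 1) / (2 * n - (n - 1) / a - 2) = (a - 1) / (2 * a - 1) := by
    rw [e0]
    field_simp
    ring
  unfold P
  rw [e1, e2, e3, ← hB]
  clear_value B
  field_simp
  ring
end

section
/- Let a > 1 be real, set θ := arccos((a−1)/a), t* := arctan(√(2a−1)) / (2θ), and B := (a/(2a−1))·cos(2t*θ)·(sin(2t*θ)/sin θ) + (a−1)/(2a−1). Then the limit as n → 1⁺ of P(t*, n, (n−1)/a) exists and equals (B² − 1)/a. -/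
open Real Filter Topology Set

theorem limit_P_at_one (a : ℝ) (ha : 1 < a) :
    Filter.Tendsto
      (fun n : ℝ =>
        P (arctan (Real.sqrt (2 * a - 1)) / (2 * arccos ((a - 1) / a))) n ((n - 1) / a))
      (𝓝[>] (1 : ℝ))
      (𝓝 (((a / (2 * a - 1) *
              Real.cos (2 * (arctan (Real.sqrt (2 * a - 1)) / (2 * arccos ((a - 1) / a))) *
                arccos ((a - 1) / a)) *
              (Real.sin (2 * (arctan (Real.sqrt (2 * a - 1)) / (2 * arccos ((a - 1) / a))) *
                  arccos ((a - 1) / a)) /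
                Real.sin (arccos ((a - 1) / a))) +
            (a - 1) / (2 * a - 1)) ^ 2 - 1) / a)) := by
  set t := arctan (Real.sqrt (2 * a - 1)) / (2 * arccos ((a - 1) / a)) with ht
  set B := a / (2 * a - 1) * Real.cos (2 * t * arccos ((a - 1) / a)) *
      (Real.sin (2 * t * arccos ((a - 1) / a)) / Real.sin (arccos ((a - 1) / a))) +
        (a - 1) / (2 * a - 1) with hB
  have ha0 : a ≠ 0 := by linarith
  have ha1 : 2 * a - 1 ≠ 0 := by linarith
  have key : Tendsto (fun n : ℝ => (n - (n - 1) / a) / (a * n) * B ^ 2 + ((n - 1) / a - 1) / (a * n))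
      (𝓝[>] (1 : ℝ)) (𝓝 ((B ^ 2 - 1) / a)) := by
    have hc : ContinuousAt
        (fun n : ℝ => (n - (n - 1) / a) / (a * n) * B ^ 2 + ((n - 1) / a - 1) / (a * n)) 1 := by
      have h1 : a * 1 ≠ 0 := by simpa using ha0
      fun_prop (disch := assumption)
    have h2 := hc.tendsto.mono_left (nhdsWithin_le_nhds (s := Ioi (1 : ℝ)))
    have h3 : (1 - (1 - 1) / a) / (a * 1) * B ^ 2 + ((1 - 1) / a - 1) / (a * 1)
        = (B ^ 2 - 1) / a := by
      field_simp
      ring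
    rwa [h3] at h2
  refine key.congr' ?_
  filter_upwards [self_mem_nhdsWithin] with n hn
  have hn1 : 1 < n := hn
  have hn0 : n - 1 ≠ 0 := by linarith
  have hnn : n ≠ 0 := by linarith
  have e1 : (n - (n - 1) / a - 1) / (n - 1) = (a - 1) / a := by
    field_simp
    ring
  have e0 : 2 * n - (n - 1) / a - 2 = (n - 1) * ((2 * a - 1) / a) := by
    field_simp
    ring
  have e2 : (n - 1) / (2 * n - (n - 1) / a - 2) = a / (2 * a - 1) := by
    rw [e0]
    field_simp
  have e3 : (n - (n - 1) / a - 1) / (2 * n - (n - 1) / a - 2) = (a - 1) / (2 * a - 1) := by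
    rw [e0]
    field_simp
    ring
  unfold P
  rw [e1, e2, e3, ← hB]
  field_simp
end

section
/- Fix a real number m > 0. Then the limit as n → ∞ of t_max(n,m) / √(n/(2m)) equals π/4; that is, for n ≫ m the maximum-probability time of the Szegedy quantum walk on a complete graph scales as (π/4)·√(n/(2m)). -/
open Real Filter Topology

theorem tMax_asymptotic_scaling (m : ℝ) (hm : 0 < m) :
    Filter.Tendsto (fun n : ℝ => tMax n m / Real.sqrt (n / (2 * m))) atTop
      (𝓝 (π / 4)) := by
  have hn1 : Tendsto (fun n : ℝ => n - 1) atTop atTop :=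
    tendsto_atTop_add_const_right _ (-1) tendsto_id
  have hu : Tendsto (fun n : ℝ => (n - 1)⁻¹) atTop (𝓝 0) := tendsto_inv_atTop_zero.comp hn1
  -- the angle tends to zero
  have hθ : Tendsto (fun n : ℝ => arccos ((n - m - 1) / (n - 1))) atTop (𝓝 0) := by
    have h1 : Tendsto (fun n : ℝ => arccos (1 - m * (n - 1)⁻¹)) atTop (𝓝 0) := by
      have := (continuous_arccos.tendsto (1 - m * 0)).comp ((hu.const_mul m).const_sub 1)
      simpa [Function.comp_def] using this
    refine h1.congr' ?_
    filter_upwards [eventually_gt_atTop 1] with n hn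
    have : n - 1 ≠ 0 := by linarith
    congr 1
    field_simp
    ring
  have hsinc : Tendsto (fun n : ℝ => sinc (arccos ((n - m - 1) / (n - 1)))) atTop (𝓝 1) := by
    have := (continuous_sinc.tendsto 0).comp hθ
    simpa [Function.comp_def] using this
  have hq : Tendsto (fun n : ℝ => √((1 + (n - 1)⁻¹) * (1 - m / 2 * (n - 1)⁻¹))) atTop (𝓝 1) := by
    have := (continuous_sqrt.tendsto _).comp
      ((hu.const_add 1).mul ((hu.const_mul (m / 2)).const_sub 1))
    simpa [Function.comp_def] using this
  have harg : Tendsto (fun n : ℝ => (2 * n - m - 2) / m) atTop atTop := by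
    apply Tendsto.atTop_div_const hm
    have : Tendsto (fun n : ℝ => 2 * n + (- m - 2)) atTop atTop :=
      tendsto_atTop_add_const_right _ _ (tendsto_id.const_mul_atTop (by norm_num))
    refine this.congr fun n => by ring
  have hat : Tendsto (fun n : ℝ => arctan (√((2 * n - m - 2) / m))) atTop (𝓝 (π / 2)) :=
    (tendsto_arctan_atTop.mono_right nhdsWithin_le_nhds).comp (tendsto_sqrt_atTop.comp harg)
  have hden := (hq.div hsinc one_ne_zero).const_mul 2
  have hfin := hat.div hden (by norm_num)
  have e : π / 2 / (2 * (1 / 1)) = π / 4 := by ring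
  rw [e] at hfin
  refine hfin.congr' ?_
  filter_upwards [eventually_gt_atTop 1, eventually_gt_atTop (1 + m)] with n hn hnm
  have h0 : 0 < n - 1 := by linarith
  have hx1 : (n - m - 1) / (n - 1) < 1 := by rw [div_lt_one h0]; linarith
  have hx0 : 0 < (n - m - 1) / (n - 1) := div_pos (by linarith) h0
  have hpos := arccos_pos.2 hx1
  have hsin : sin (arccos ((n - m - 1) / (n - 1))) ≠ 0 := by
    apply ne_of_gt
    apply sin_pos_of_pos_of_lt_pi hpos
    exact arccos_lt_pi.2 (by linarith)
  have key : √((1 + (n - 1)⁻¹) * (1 - m / 2 * (n - 1)⁻¹))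
      = sin (arccos ((n - m - 1) / (n - 1))) * √(n / (2 * m)) := by
    rw [sin_arccos, ← sqrt_mul (by nlinarith)]
    congr 1
    field_simp
    ring
  simp only [tMax, Pi.div_apply]
  rw [key, sinc_of_ne_zero hpos.ne', div_div]
  congr 1
  field_simp
end
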